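/- Let n and k be natural numbers and let 𝓘 be a nonempty family of subsets of {1, …, n} such that |A| = k for every A ∈ 𝓘. Then for every A, B ∈ 𝓘 and every i ∈ A \ B, there exist sets E ⊆ A \ B and F ⊆ B \ A satisfying: (1) |E| = |F|; (2) i ∈ E; (3) (A \ E) ∪ F ∈ 𝓘; and (4) for all M, N ∈ 𝓘, if e_A + e_{(A \ E) ∪ F} = e_M + e_N then {A, (A \ E) ∪ F} = {M, N}. -/

import Mathlib

/-- Indicator vector of a finite subset of `Fin n`. -/
def indVec {n : ℕ} (A : Finset (Fin n)) : Fin n → ℝ := fun x => if x ∈ A then 1 else 0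

/-!
Among the members of the family lying between `A ∩ B` and `A ∪ B` and avoiding `i`, take `C` with
`A ∆ C` inclusion-minimal, and put `E = A \ C`, `F = C \ A`. If `e_A + e_C = e_M + e_N`, then
`M ∩ N = A ∩ C` and `M ∪ N = A ∪ C`. Since `i ∉ C`, one of `M`, `N` avoids `i`; it lies between
`A ∩ C` and `A ∪ C`, hence is `C` by minimality, and the other one is then `A`.
-/

section Lattice

open scoped symmDiff Interval

theorem right_mem_uIcc_of_inf_eq_of_sup_eq {α : Type*} [Lattice α] {a c m n : α}
    (hinf : m ⊓ n = a ⊓ c) (hsup : m ⊔ n = a ⊔ c) : n ∈ [[a, c]] :=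
  ⟨hinf.ge.trans inf_le_right, le_sup_right.trans hsup.le⟩

section GeneralizedCoheytingAlgebra

variable {α : Type*} [GeneralizedCoheytingAlgebra α] {a b c : α}

theorem sdiff_le_sdiff_of_inf_le (h : a ⊓ b ≤ c) : a \ c ≤ a \ b :=
  calc
    a \ c ≤ a \ (a ⊓ b) := sdiff_le_sdiff_left h
    _ = a \ b := sdiff_inf_self_left a b

theorem sdiff_le_sdiff_of_le_sup (h : c ≤ a ⊔ b) : c \ a ≤ b \ a :=
  calc
    c \ a ≤ (a ⊔ b) \ a := sdiff_le_sdiff_right h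
    _ = b \ a := sup_sdiff_left_self

theorem symmDiff_le_symmDiff_of_mem_uIcc (hc : c ∈ [[a, b]]) : a ∆ c ≤ a ∆ b :=
  sup_le_sup (sdiff_le_sdiff_of_inf_le hc.1) (sdiff_le_sdiff_of_le_sup hc.2)

end GeneralizedCoheytingAlgebra

theorem eq_of_minimalFor_symmDiff_of_mem_uIcc {α : Type*} [GeneralizedBooleanAlgebra α]
    {P : α → Prop} {a b c : α} (hc : MinimalFor P (a ∆ ·) c) (hb : P b) (hbc : b ∈ [[a, c]]) :
    b = c :=
  have hle : a ∆ b ≤ a ∆ c := symmDiff_le_symmDiff_of_mem_uIcc hbc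
  symmDiff_right_injective a (hle.antisymm (hc.le_of_le hb hle))

end Lattice

theorem inter_eq_and_union_eq_of_indicator_add_eq {α R : Type*} [AddMonoidWithOne R] [CharZero R]
    {s t u v : Set α}
    (h : s.indicator (1 : α → R) + t.indicator 1 = u.indicator 1 + v.indicator 1) :
    s ∩ t = u ∩ v ∧ s ∪ t = u ∪ v := by
  have hpoint (x : α) : (x ∈ s ∧ x ∈ t ↔ x ∈ u ∧ x ∈ v) ∧ (x ∈ s ∨ x ∈ t ↔ x ∈ u ∨ x ∈ v) := by
    have hx := congrFun h x
    by_cases hs : x ∈ s <;> by_cases ht : x ∈ t <;> by_cases hu : x ∈ u <;> by_cases hv : x ∈ v <;>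
      simp_all [one_add_one_eq_two]
  exact ⟨Set.ext fun x => (hpoint x).1, Set.ext fun x => (hpoint x).2⟩

section Finset

open scoped symmDiff Interval Finset

variable {α : Type*} [DecidableEq α] {𝓘 : Set (Finset α)} {A B : Finset α} {i : α}

theorem exists_mem_uIcc_forall_pair_eq (A : Finset α) (hB : B ∈ 𝓘) (hiB : i ∉ B) :
    ∃ C ∈ 𝓘, C ∈ [[A, B]] ∧ i ∉ C ∧
      ∀ M ∈ 𝓘, ∀ N ∈ 𝓘, M ∩ N = A ∩ C → M ∪ N = A ∪ C →
        ({A, C} : Set (Finset α)) = {M, N} := by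
  obtain ⟨C, hmin⟩ := exists_minimalFor_of_wellFoundedLT
    (fun C => C ∈ 𝓘 ∧ C ∈ [[A, B]] ∧ i ∉ C) (A ∆ ·) ⟨B, hB, Set.right_mem_uIcc, hiB⟩
  obtain ⟨hC, hCAB, hiC⟩ := hmin.prop
  refine ⟨C, hC, hCAB, hiC, fun M hM N hN hinter hunion => ?_⟩
  wlog hiN : i ∉ N generalizing M N
  · have hiM : i ∉ M := fun hiM =>
      hiC (Finset.mem_inter.1 (hinter ▸ Finset.mem_inter.2 ⟨hiM, not_not.1 hiN⟩)).2
    rw [this N hN M hM (by rwa [Finset.inter_comm]) (by rwa [Finset.union_comm]) hiM,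
      Set.pair_comm]
  have hNAC : N ∈ [[A, C]] := right_mem_uIcc_of_inf_eq_of_sup_eq hinter hunion
  have hNAB : N ∈ [[A, B]] := Set.uIcc_subset_uIcc_left hCAB hNAC
  obtain rfl : N = C := eq_of_minimalFor_symmDiff_of_mem_uIcc hmin ⟨hN, hNAB, hiN⟩ hNAC
  obtain rfl : M = A := eq_of_inf_eq_sup_eq hinter hunion
  rfl

theorem quasimatroid_exchange_general (R : Type*) [AddMonoidWithOne R] [CharZero R]
    (hB : B ∈ 𝓘) (hi : i ∈ A \ B) :
    ∃ E ⊆ A \ B, ∃ F ⊆ B \ A,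
      #E + #((A \ E) ∪ F) = #A + #F ∧
      i ∈ E ∧
      (A \ E) ∪ F ∈ 𝓘 ∧
      ∀ M ∈ 𝓘, ∀ N ∈ 𝓘,
        (A : Set α).indicator (1 : α → R) + (↑((A \ E) ∪ F) : Set α).indicator 1 =
            (M : Set α).indicator 1 + (N : Set α).indicator 1 →
          ({A, (A \ E) ∪ F} : Set (Finset α)) = {M, N} := by
  obtain ⟨hiA, hiB⟩ := Finset.mem_sdiff.1 hi
  obtain ⟨C, hC, hCAB, hiC, hpair⟩ := exists_mem_uIcc_forall_pair_eq A hB hiB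
  have hEF : (A \ (A \ C)) ∪ (C \ A) = C := by
    rw [Finset.sdiff_sdiff_self_left, Finset.inter_comm, Finset.union_comm,
      Finset.sdiff_union_inter]
  refine ⟨A \ C, sdiff_le_sdiff_of_inf_le hCAB.1, C \ A, sdiff_le_sdiff_of_le_sup hCAB.2,
    ?_, Finset.mem_sdiff.2 ⟨hiA, hiC⟩, hEF.symm ▸ hC, ?_⟩
  all_goals rw [hEF]
  · rw [Finset.card_sdiff_add_card, add_comm, Finset.card_sdiff_add_card, Finset.union_comm]
  · intro M hM N hN hsum
    obtain ⟨hinter, hunion⟩ := inter_eq_and_union_eq_of_indicator_add_eq hsum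
    exact hpair M hM N hN (mod_cast hinter.symm) (mod_cast hunion.symm)

end Finset

theorem indVec_eq_indicator {n : ℕ} (A : Finset (Fin n)) :
    indVec A = (A : Set (Fin n)).indicator 1 := by
  ext x
  simp only [indVec, Set.indicator_apply, Finset.mem_coe, Pi.one_apply]

/-- Generalized exchange property for an arbitrary nonempty family `𝓘` of `k`-subsets of
`{1, …, n}`: for `A, B ∈ 𝓘` and `i ∈ A \ B` there are `E ⊆ A \ B` and `F ⊆ B \ A` with
`|E| = |F|`, `i ∈ E`, `(A \ E) ∪ F ∈ 𝓘`, and `e_A + e_{(A \ E) ∪ F}` has a unique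
decomposition as a sum of two indicator vectors of members of `𝓘`. -/
theorem quasimatroid_exchange (n k : ℕ) (𝓘 : Set (Finset (Fin n)))
    (hne : 𝓘.Nonempty) (hcard : ∀ A ∈ 𝓘, A.card = k) :
    ∀ A ∈ 𝓘, ∀ B ∈ 𝓘, ∀ i ∈ A \ B,
      ∃ E ⊆ A \ B, ∃ F ⊆ B \ A,
        E.card = F.card ∧
        i ∈ E ∧
        (A \ E) ∪ F ∈ 𝓘 ∧
        (∀ M ∈ 𝓘, ∀ N ∈ 𝓘,
          indVec A + indVec ((A \ E) ∪ F) = indVec M + indVec N →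
            ({A, (A \ E) ∪ F} : Set (Finset (Fin n))) = {M, N}) := by
  intro A hA B hB i hi
  obtain ⟨E, hE, F, hF, hcardEF, hiE, hmem, hpair⟩ := quasimatroid_exchange_general ℝ hB hi
  simp only [indVec_eq_indicator]
  exact ⟨E, hE, F, hF, by rw [hcard _ hmem, hcard A hA] at hcardEF; lia, hiE, hmem, hpair⟩
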